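/- arXiv:1112.6242 — 4 statements merged into one kernel-verified Lean document; each statement's English description precedes it below -/
import Mathlib

section
/- Let V be a real vector space and let Π, Q, R₀, Q₁ : V → V be linear maps satisfying: Π is idempotent, Q∘Π = Π∘Q = 0, Q∘R₀ = R₀∘Q = I − Π, and the balance condition Π∘Q₁ = 0. Let φ ∈ V satisfy Πφ = φ. Define φ₁ := −R₀Q₁φ, φ₂ := R₀(Q₁R₀Q₁ − ΠQ₁R₀Q₁Π)φ, and ψ := −ΠQ₁R₀Q₁φ. Then for every real ε ≠ 0 the exact asymptotic expansion holds: (ε⁻²Q + ε⁻¹Q₁)(φ + εφ₁ + ε²φ₂) = ψ + ε·Q₁φ₂. In particular, the limiting (solvability) term satisfies Πψ = −ΠQ₁R₀Q₁Πφ. -/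
/-- Full solution of the singular perturbation problem: with projector `P`, operators
`Q, R₀, Q₁` satisfying `P∘P = P`, `Q∘P = P∘Q = 0`, `Q∘R₀ = R₀∘Q = I − P` and the balance
condition `P∘Q₁ = 0`, and `φ` with `Pφ = φ`, setting `φ₁ := −R₀Q₁φ`,
`φ₂ := R₀(Q₁R₀Q₁ − PQ₁R₀Q₁P)φ` and `ψ := −PQ₁R₀Q₁φ`, for every `ε ≠ 0`
`(ε⁻²Q + ε⁻¹Q₁)(φ + εφ₁ + ε²φ₂) = ψ + ε·Q₁φ₂`, and `Pψ = −PQ₁R₀Q₁Pφ`. -/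
theorem singular_perturbation_full_solution {V : Type*} [AddCommGroup V] [Module ℝ V]
    (P Q R₀ Q₁ : V →ₗ[ℝ] V)
    (hP : P ∘ₗ P = P) (hQP : Q ∘ₗ P = 0) (hPQ : P ∘ₗ Q = 0)
    (hQR : Q ∘ₗ R₀ = (LinearMap.id : V →ₗ[ℝ] V) - P)
    (hRQ : R₀ ∘ₗ Q = (LinearMap.id : V →ₗ[ℝ] V) - P)
    (hbal : P ∘ₗ Q₁ = 0)
    (φ : V) (hφ : P φ = φ)
    (φ₁ φ₂ ψ : V)
    (hφ₁ : φ₁ = -(R₀ (Q₁ φ)))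
    (hφ₂ : φ₂ = R₀ (Q₁ (R₀ (Q₁ φ)) - P (Q₁ (R₀ (Q₁ (P φ))))))
    (hψ : ψ = -(P (Q₁ (R₀ (Q₁ φ))))) :
    (∀ ε : ℝ, ε ≠ 0 →
      (ε ^ 2)⁻¹ • Q (φ + ε • φ₁ + ε ^ 2 • φ₂) + ε⁻¹ • Q₁ (φ + ε • φ₁ + ε ^ 2 • φ₂) =
        ψ + ε • Q₁ φ₂) ∧
    P ψ = -(P (Q₁ (R₀ (Q₁ (P φ))))) := by
  have hP' : ∀ x, P (P x) = P x := fun x => by simpa using LinearMap.congr_fun hP x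
  have hQP' : ∀ x, Q (P x) = 0 := fun x => by simpa using LinearMap.congr_fun hQP x
  have hQR' : ∀ x, Q (R₀ x) = x - P x := fun x => by simpa using LinearMap.congr_fun hQR x
  have hb : ∀ x, P (Q₁ x) = 0 := fun x => by simpa using LinearMap.congr_fun hbal x
  have e0 : Q φ = 0 := by rw [← hφ, hQP']
  have e1 : Q φ₁ = -Q₁ φ := by rw [hφ₁, map_neg, hQR', hb, sub_zero]
  have e2 : Q φ₂ = ψ - Q₁ φ₁ := by
    rw [hφ₂, hQR', hψ, hφ₁, map_sub, hP', hφ, map_neg]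
    abel
  refine ⟨fun ε hε => ?_, ?_⟩
  · simp only [map_add, map_smul, e0, e1, e2]
    match_scalars <;> field_simp <;> ring
  · rw [hψ, map_neg, hP', hφ]
end

section
/- Let V be a real vector space, let Π : V → V be an idempotent linear map, set Q := Π − I and R₀ := Π − I, and let S : V → V be a linear map satisfying the balance condition Π∘S∘Π = 0. Let c ∈ ℝ and let φ ∈ V satisfy Πφ = φ. Define φ₁ := −c·R₀Sφ and φ₂ := c²·R₀SR₀Sφ. Then for every real ε ≠ 0: (ε⁻²Q + ε⁻¹cS)(φ + εφ₁ + ε²φ₂) = −c²·ΠSR₀Sφ + ε·c³·SR₀SR₀Sφ. -/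
/-- Operator-level content of Lemma 1 (MSRE): with projector `P`, `Q := P − I`, `R₀ := P − I`,
a linear map `S` satisfying the balance condition `P∘S∘P = 0`, a constant `c`, `φ` with
`Pφ = φ`, `φ₁ := −c·R₀Sφ` and `φ₂ := c²·R₀SR₀Sφ`, for every `ε ≠ 0`:
`(ε⁻²Q + ε⁻¹cS)(φ + εφ₁ + ε²φ₂) = −c²·PSR₀Sφ + ε·c³·SR₀SR₀Sφ`. -/
theorem msre_generator_asymptotic_expansion {V : Type*} [AddCommGroup V] [Module ℝ V]
    (P S : V →ₗ[ℝ] V) (hP : P ∘ₗ P = P)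
    (hbal : P ∘ₗ S ∘ₗ P = 0) (c : ℝ) (φ : V) (hφ : P φ = φ)
    (φ₁ φ₂ : V)
    (hφ₁ : φ₁ = -(c • (P - (LinearMap.id : V →ₗ[ℝ] V)) (S φ)))
    (hφ₂ : φ₂ = c ^ 2 •
      (P - (LinearMap.id : V →ₗ[ℝ] V)) (S ((P - (LinearMap.id : V →ₗ[ℝ] V)) (S φ)))) :
    ∀ ε : ℝ, ε ≠ 0 →
      (ε ^ 2)⁻¹ • (P - (LinearMap.id : V →ₗ[ℝ] V)) (φ + ε • φ₁ + ε ^ 2 • φ₂)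
          + ε⁻¹ • (c • S (φ + ε • φ₁ + ε ^ 2 • φ₂)) =
        -(c ^ 2 • P (S ((P - (LinearMap.id : V →ₗ[ℝ] V)) (S φ))))
          + (ε * c ^ 3) •
            S ((P - (LinearMap.id : V →ₗ[ℝ] V))
              (S ((P - (LinearMap.id : V →ₗ[ℝ] V)) (S φ)))) := by
  intro ε hε
  have hPP : ∀ x, P (P x) = P x := fun x => LinearMap.congr_fun hP x
  have h0 : P (S φ) = 0 := by
    have h := LinearMap.congr_fun hbal φ
    simpa [hφ] using h
  subst hφ₁ hφ₂
  simp only [LinearMap.sub_apply, LinearMap.id_apply, map_add, map_sub, map_smul, map_neg,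
    hPP, h0, hφ, zero_sub, map_zero]
  match_scalars <;> field_simp <;> ring
end

section
/- Let n ≥ 2, let σ be the surface measure on the unit sphere S^{n-1} ⊂ ℝⁿ with N := σ(S^{n-1}), let c > 0, and let φ : ℝⁿ → ℝ be three times continuously differentiable. For ε ≠ 0 define the perturbed test function φ^ε : ℝⁿ × S^{n-1} → ℝ by φ^ε(x,v) := φ(x) − ε·c·⟨v, ∇φ(x)⟩ + ε²·c²·(D²φ(x)[v,v] − Δφ(x)/n), where D²φ(x)[v,v] is the Hessian quadratic form and Δ the Laplacian. Then for all x ∈ ℝⁿ, v ∈ S^{n-1} and ε ≠ 0: ε⁻²·[ (1/N)∫_{S^{n-1}} φ^ε(x,w) dσ(w) − φ^ε(x,v) ] − ε⁻¹·c·⟨v, ∇_x φ^ε(x,v)⟩ = (c²/n)·Δφ(x) − ε·c³·⟨v, ∇_x ( D²φ(x)[v,v] − Δφ(x)/n )⟩, where ∇_x denotes the gradient in the x variable with v held fixed. -/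
open MeasureTheory Real
open scoped InnerProductSpace

/-- Hessian quadratic form `D²φ(x)[v,v]`. -/
noncomputable def hessQF {n : ℕ} (φ : EuclideanSpace ℝ (Fin n) → ℝ)
    (x v : EuclideanSpace ℝ (Fin n)) : ℝ :=
  iteratedFDeriv ℝ 2 φ x ![v, v]

/-- Laplacian `Δφ(x) = Σ_i ∂²φ/∂x_i²`. -/
noncomputable def lapl {n : ℕ} (φ : EuclideanSpace ℝ (Fin n) → ℝ)
    (x : EuclideanSpace ℝ (Fin n)) : ℝ :=
  ∑ i : Fin n, hessQF φ x (EuclideanSpace.single i 1)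

/-- Surface measure on spheres in `ℝⁿ`: the `(n−1)`-dimensional Hausdorff measure. -/
noncomputable def sphMeasure (n : ℕ) : Measure (EuclideanSpace ℝ (Fin n)) :=
  μH[(n : ℝ) - 1]

/-- Total surface measure `N = σ(S^{n-1})` of the unit sphere. -/
noncomputable def sphN (n : ℕ) : ℝ :=
  (sphMeasure n (Metric.sphere (0 : EuclideanSpace ℝ (Fin n)) 1)).toReal

/-- The perturbed test function
`φ^ε(x,v) = φ(x) − εc⟨v,∇φ(x)⟩ + ε²c²(D²φ(x)[v,v] − Δφ(x)/n)`. -/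
noncomputable def phiEps {n : ℕ} (c ε : ℝ) (φ : EuclideanSpace ℝ (Fin n) → ℝ)
    (x v : EuclideanSpace ℝ (Fin n)) : ℝ :=
  φ x - ε * c * ⟪v, gradient φ x⟫_ℝ + ε ^ 2 * c ^ 2 * (hessQF φ x v - lapl φ x / n)

open Metric Set

abbrev EE (n : ℕ) := EuclideanSpace ℝ (Fin n)

lemma sph_pos (m : ℕ) : 0 < μH[(m:ℝ)] (sphere (0 : EE (m+1)) 1) := by
  let p : EE (m+1) → (Fin m → ℝ) := fun w i => w i.succ
  have hp : LipschitzWith 1 p := by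
    refine LipschitzWith.of_dist_le_mul fun a b => ?_
    simp only [NNReal.coe_one, one_mul]
    refine (dist_pi_le_iff dist_nonneg).2 fun i => ?_
    simpa [p, dist_eq_norm] using PiLp.norm_apply_le (a - b) i.succ
  have h := (hp.lipschitzOnWith (s := sphere (0 : EE (m+1)) 1)).hausdorffMeasure_image_le (d := (m:ℝ)) (by positivity)
  have hsub : ball (0 : Fin m → ℝ) (1/(m+1)) ⊆ p '' sphere (0 : EE (m+1)) 1 := by
    intro z hz
    have hz' : ∀ i, |z i| < 1/(m+1) := by
      intro i
      have := (norm_le_pi_norm z i).trans_lt (mem_ball_zero_iff.1 hz)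
      simpa using this
    have hs : ∑ i, z i ^ 2 ≤ 1 := by
      have : ∀ i ∈ Finset.univ, z i ^ 2 ≤ 1/((m:ℝ)+1) := by
        intro i _
        have h1 := hz' i
        have h2 : 1/((m:ℝ)+1) ≤ 1 := by
          rw [div_le_one (by positivity)]; linarith [(Nat.cast_nonneg m : (0:ℝ) ≤ m)]
        rw [← sq_abs]
        nlinarith [abs_nonneg (z i)]
      refine (Finset.sum_le_sum this).trans ?_
      simp
      rw [← div_eq_mul_inv, div_le_one (by positivity)]
      linarith
    refine ⟨WithLp.toLp 2 (Fin.cons (√(1 - ∑ i, z i ^ 2)) z), ?_, ?_⟩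
    · rw [mem_sphere_zero_iff_norm, EuclideanSpace.norm_eq, Fin.sum_univ_succ]
      simp [Real.sq_sqrt (sub_nonneg.2 hs)]
    · ext i; simp [p]
  have hb : 0 < μH[(m:ℝ)] (ball (0 : Fin m → ℝ) (1/(m+1))) := by
    have e := @hausdorffMeasure_pi_real (Fin m) _
    simp only [Fintype.card_fin] at e
    rw [e]
    exact measure_ball_pos _ _ (by positivity)
  have := hb.trans_le ((measure_mono hsub).trans h)
  simpa using this

lemma sph_fin (m : ℕ) : μH[(m:ℝ)] (sphere (0 : EE (m+1)) 1) < ⊤ := by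
  let y : Fin (m+1) → ℝ → (Fin m → ℝ) → EE (m+1) := fun i s z =>
    WithLp.toLp 2 (i.insertNth s z)
  have hy : ∀ i s, ContDiff ℝ 1 (y i s) := by
    intro i s
    rw [contDiff_euclidean]
    intro j
    refine i.succAboveCases ?_ ?_ j
    · simp only [y, Fin.insertNth_apply_same]; exact contDiff_const
    · intro k; simp only [y, Fin.insertNth_apply_succAbove]; fun_prop
  let F : Fin (m+1) → ℝ → (Fin m → ℝ) → EE (m+1) := fun i s z => ‖y i s z‖⁻¹ • y i s z
  let K : Set (Fin m → ℝ) := closedBall 0 1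
  have hFin : ∀ i s, s ≠ 0 → μH[(m:ℝ)] (F i s '' K) < ⊤ := by
    intro i s hs
    have hne : ∀ z, y i s z ≠ 0 := by
      intro z h
      have := congrArg (fun w : EE (m+1) => w i) h
      simp [y] at this; exact hs this
    have hF : ContDiff ℝ 1 (F i s) :=
      (((hy i s).norm ℝ hne).inv (fun z => norm_ne_zero_iff.2 (hne z))).smul (hy i s)
    obtain ⟨C, hC⟩ := hF.contDiffOn.exists_lipschitzOnWith (s := K) one_ne_zero
      (convex_closedBall _ _) (isCompact_closedBall _ _)
    refine (hC.hausdorffMeasure_image_le (d := (m:ℝ)) (by positivity)).trans_lt ?_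
    have e := @hausdorffMeasure_pi_real (Fin m) _
    simp only [Fintype.card_fin] at e
    rw [e]
    refine ENNReal.mul_lt_top ?_ (isCompact_closedBall _ _).measure_lt_top
    simp
  have hcov : sphere (0 : EE (m+1)) 1 ⊆ ⋃ i, (F i 1 '' K ∪ F i (-1) '' K) := by
    intro w hw
    have hw1 : ‖w‖ = 1 := mem_sphere_zero_iff_norm.1 hw
    obtain ⟨i, hi⟩ := Finite.exists_max (fun i => |w i|)
    have hpos : 0 < |w i| := by
      by_contra hcon
      have h0 : w = 0 := by
        ext j
        have := hi j
        simpa using abs_nonpos_iff.1 (this.trans (not_lt.1 hcon))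
      simp [h0] at hw1
    have key : ∀ s : ℝ, w i = |w i| * s → w ∈ F i s '' K := by
      intro s hs
      have hyw : y i s (fun k => |w i|⁻¹ * w (i.succAbove k)) = |w i|⁻¹ • w := by
        ext j
        refine i.succAboveCases ?_ ?_ j
        · simp only [y, Fin.insertNth_apply_same, PiLp.smul_apply, smul_eq_mul]
          nth_rewrite 2 [hs]
          field_simp
        · intro k; simp [y]
      refine ⟨fun k => |w i|⁻¹ * w (i.succAbove k), ?_, ?_⟩
      · rw [mem_closedBall_zero_iff, pi_norm_le_iff_of_nonneg zero_le_one]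
        intro k
        rw [Real.norm_eq_abs, abs_mul, abs_inv, abs_abs, inv_mul_le_iff₀ hpos, mul_one]
        exact hi _
      · simp only [F, hyw, norm_smul, hw1, norm_inv, norm_abs_eq_norm, Real.norm_eq_abs, smul_smul]
        have : (|w i|⁻¹ * 1)⁻¹ * |w i|⁻¹ = 1 := by field_simp
        rw [this, one_smul]
    refine mem_iUnion.2 ⟨i, ?_⟩
    rcases le_total 0 (w i) with h | h
    · left; exact key 1 (by rw [abs_of_nonneg h]; ring)
    · right; exact key (-1) (by rw [abs_of_nonpos h]; ring)
  refine (measure_mono hcov).trans_lt ((measure_iUnion_le _).trans_lt ?_)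
  rw [tsum_fintype, ENNReal.sum_lt_top]
  intro i _
  exact (measure_union_le _ _).trans_lt
    (ENNReal.add_lt_top.2 ⟨hFin i 1 one_ne_zero, hFin i (-1) (by norm_num)⟩)

lemma sph_inv (n : ℕ) (e : EE n ≃ₗᵢ[ℝ] EE n) (f : EE n → ℝ) :
    ∫ w in sphere (0 : EE n) 1, f (e w) ∂(sphMeasure n) =
      ∫ w in sphere (0 : EE n) 1, f w ∂(sphMeasure n) := by
  have hp : MeasurePreserving e (sphMeasure n) (sphMeasure n) :=
    e.toIsometryEquiv.measurePreserving_hausdorffMeasure _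
  have := hp.setIntegral_preimage_emb e.toHomeomorph.measurableEmbedding f (sphere 0 1)
  have hpre : e ⁻¹' sphere (0 : EE n) 1 = sphere 0 1 := by
    ext w; simp
  rwa [hpre] at this

lemma sph_lt_top (n : ℕ) (hn : 1 ≤ n) : sphMeasure n (sphere 0 1) < ⊤ := by
  obtain ⟨m, rfl⟩ := Nat.exists_eq_add_of_le' hn
  simpa [sphMeasure] using sph_fin m

lemma sphN_pos (n : ℕ) (hn : 1 ≤ n) : 0 < sphN n := by
  refine ENNReal.toReal_pos ?_ (sph_lt_top n hn).ne
  obtain ⟨m, rfl⟩ := Nat.exists_eq_add_of_le' hn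
  simpa [sphMeasure] using (sph_pos m).ne'

lemma sph_int (n : ℕ) (hn : 1 ≤ n) (f : EE n → ℝ) (hf : Continuous f) :
    IntegrableOn f (sphere 0 1) (sphMeasure n) := by
  obtain ⟨C, hC⟩ := (isCompact_sphere (0 : EE n) 1).exists_bound_of_continuousOn hf.continuousOn
  refine Measure.integrableOn_of_bounded (M := C) (sph_lt_top n hn).ne hf.aestronglyMeasurable ?_
  exact (ae_restrict_iff' isClosed_sphere.measurableSet).2 (Filter.Eventually.of_forall hC)

lemma sph_lin (n : ℕ) (L : EE n →L[ℝ] ℝ) :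
    ∫ w in sphere (0 : EE n) 1, L w ∂(sphMeasure n) = 0 := by
  have := sph_inv n (LinearIsometryEquiv.neg ℝ) L
  simp [integral_neg] at this
  linarith

lemma sph_off (n : ℕ) (i j : Fin n) (hij : i ≠ j) :
    ∫ w in sphere (0 : EE n) 1, w i * w j ∂(sphMeasure n) = 0 := by
  have := sph_inv n (LinearIsometryEquiv.piLpCongrRight 2
    (fun k => if k = i then LinearIsometryEquiv.neg ℝ else LinearIsometryEquiv.refl ℝ ℝ))
    (fun w => w i * w j)
  simp [hij.symm, integral_neg] at this
  linarith

lemma sph_diag (n : ℕ) (i j : Fin n) :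
    ∫ w in sphere (0 : EE n) 1, w i * w i ∂(sphMeasure n) =
    ∫ w in sphere (0 : EE n) 1, w j * w j ∂(sphMeasure n) := by
  have := sph_inv n (LinearIsometryEquiv.piLpCongrLeft 2 ℝ ℝ (Equiv.swap i j))
    (fun w => w i * w i)
  simp [LinearIsometryEquiv.piLpCongrLeft_apply, Equiv.piCongrLeft'] at this
  exact this.symm

lemma sph_const (n : ℕ) (a : ℝ) :
    ∫ _w in sphere (0 : EE n) 1, a ∂(sphMeasure n) = sphN n * a := by
  rw [setIntegral_const]; rfl

lemma sph_sq (n : ℕ) (hn : 1 ≤ n) (i : Fin n) :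
    ∫ w in sphere (0 : EE n) 1, w i * w i ∂(sphMeasure n) = sphN n / n := by
  have h1 : ∑ j : Fin n, ∫ w in sphere (0 : EE n) 1, w j * w j ∂(sphMeasure n) = sphN n := by
    rw [← integral_finsetSum]
    · rw [← mul_one (sphN n), ← sph_const n 1]
      refine setIntegral_congr_fun isClosed_sphere.measurableSet fun w hw => ?_
      have hw1 : ‖w‖ = 1 := mem_sphere_zero_iff_norm.1 hw
      have := EuclideanSpace.real_norm_sq_eq w
      rw [hw1] at this
      simp only [← pow_two]
      linarith
    · intro j _
      exact sph_int n hn (fun w => w j * w j) (by fun_prop)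
  rw [Finset.sum_congr rfl (fun j _ => sph_diag n j i)] at h1
  simp at h1
  have : (n:ℝ) ≠ 0 := by positivity
  rw [eq_div_iff this]
  linarith

lemma sph_quad (n : ℕ) (hn : 1 ≤ n) (B : EE n →L[ℝ] EE n →L[ℝ] ℝ) :
    ∫ w in sphere (0 : EE n) 1, B w w ∂(sphMeasure n) =
      sphN n * ((∑ i, B (EuclideanSpace.single i 1) (EuclideanSpace.single i 1)) / n) := by
  have hB : ∀ w : EE n, B w w = ∑ i, ∑ j,
      (w i * w j) * B (EuclideanSpace.single i 1) (EuclideanSpace.single j 1) := by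
    intro w
    have hw : w = ∑ i, w i • (EuclideanSpace.single i (1:ℝ) : EE n) := by
      ext k; simp [Pi.single_apply]
    conv_lhs => rw [hw]
    simp [map_sum, Finset.mul_sum, mul_assoc]
    try (rw [Finset.sum_comm]; refine Finset.sum_congr rfl fun i _ => Finset.sum_congr rfl fun j _ => by ring)
  rw [show (fun w : EE n => B w w) = _ from funext hB]
  have hint : ∀ i j : Fin n, Integrable (fun w : EE n => (w i * w j) *
      B (EuclideanSpace.single i 1) (EuclideanSpace.single j 1))
      ((sphMeasure n).restrict (sphere 0 1)) := fun i j =>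
    sph_int n hn (fun w => (w i * w j) * _) (by fun_prop)
  rw [integral_finsetSum _ (fun i _ => integrable_finsetSum _ fun j _ => hint i j)]
  rw [Finset.sum_div, Finset.mul_sum]
  refine Finset.sum_congr rfl fun i _ => ?_
  rw [integral_finsetSum _ (fun j _ => hint i j), Finset.sum_eq_single i]
  · rw [integral_mul_const, sph_sq n hn]; ring
  · intro j _ hji
    rw [integral_mul_const, sph_off n i j hji.symm, zero_mul]
  · simp

lemma inner_grad {n : ℕ} (f : EE n → ℝ) (x v : EE n) : ⟪v, gradient f x⟫_ℝ = fderiv ℝ f x v := by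
  rw [real_inner_comm, ← toDual_gradient]; simp

lemma hess_eq {n : ℕ} (f : EE n → ℝ) (x v : EE n) :
    hessQF f x v = fderiv ℝ (fderiv ℝ f) x v v := by
  simp [hessQF, iteratedFDeriv_two_apply]

lemma avg {n : ℕ} (hn : 1 ≤ n) (c ε : ℝ) (φ : EE n → ℝ) (x : EE n) :
    ∫ w in sphere (0 : EE n) 1, phiEps c ε φ x w ∂(sphMeasure n) = sphN n * φ x := by
  simp only [phiEps, inner_grad, hess_eq]
  have e1 : Integrable (fun _ : EE n => φ x) ((sphMeasure n).restrict (sphere 0 1)) :=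
    sph_int n hn _ continuous_const
  have e2 : Integrable (fun w : EE n => ε * c * fderiv ℝ φ x w)
    ((sphMeasure n).restrict (sphere 0 1)) := sph_int n hn _ (by fun_prop)
  have e3 : Integrable (fun w : EE n => fderiv ℝ (fderiv ℝ φ) x w w)
    ((sphMeasure n).restrict (sphere 0 1)) := sph_int n hn _ (by fun_prop)
  have e4 : Integrable (fun _ : EE n => lapl φ x / n)
    ((sphMeasure n).restrict (sphere 0 1)) := sph_int n hn _ continuous_const
  have e12 : Integrable (fun w : EE n => φ x - ε * c * fderiv ℝ φ x w)
    ((sphMeasure n).restrict (sphere 0 1)) := e1.sub e2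
  have e34 : Integrable (fun w : EE n => ε ^ 2 * c ^ 2 *
      (fderiv ℝ (fderiv ℝ φ) x w w - lapl φ x / n))
    ((sphMeasure n).restrict (sphere 0 1)) := (e3.sub e4).const_mul _
  rw [integral_add e12 e34, integral_sub e1 e2,
    integral_const_mul, integral_const_mul, integral_sub e3 e4, sph_lin, sph_quad n hn,
    sph_const, sph_const]
  simp only [lapl, hess_eq]
  ring

/-- Lemma 1 of the paper, concrete form: the MSRE generator `L^ε = ε⁻²Q + ε⁻¹cS(θ)` applied to
the perturbed test function `φ^ε` equals `(c²/n)Δφ(x)` plus a remainder of order `ε`. -/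
theorem msre_generator_on_perturbed_test_function (n : ℕ) (hn : 2 ≤ n) (c : ℝ) (hc : 0 < c)
    (φ : EuclideanSpace ℝ (Fin n) → ℝ) (hφ : ContDiff ℝ 3 φ)
    (x v : EuclideanSpace ℝ (Fin n))
    (hv : v ∈ Metric.sphere (0 : EuclideanSpace ℝ (Fin n)) 1)
    (ε : ℝ) (hε : ε ≠ 0) :
    (ε ^ 2)⁻¹ * ((1 / sphN n) *
          (∫ w in Metric.sphere (0 : EuclideanSpace ℝ (Fin n)) 1,
            phiEps c ε φ x w ∂(sphMeasure n)) - phiEps c ε φ x v)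
      - ε⁻¹ * c * ⟪v, gradient (fun y => phiEps c ε φ y v) x⟫_ℝ =
    c ^ 2 / n * lapl φ x
      - ε * c ^ 3 * ⟪v, gradient (fun y => hessQF φ y v - lapl φ y / n) x⟫_ℝ := by
  have hN := (sphN_pos n (by omega)).ne'
  rw [avg (by omega)]
  have d1 : ContDiff ℝ 2 (fderiv ℝ φ) := hφ.fderiv_right (by norm_num)
  have d2 : ContDiff ℝ 1 (fderiv ℝ (fderiv ℝ φ)) := d1.fderiv_right (by norm_num)
  have D0 : DifferentiableAt ℝ φ x := hφ.differentiable (by norm_num) x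
  have D1 : DifferentiableAt ℝ (fderiv ℝ φ) x := d1.differentiable (by norm_num) x
  have D2 : DifferentiableAt ℝ (fderiv ℝ (fderiv ℝ φ)) x := d2.differentiable (by norm_num) x
  have DH : ∀ u, DifferentiableAt ℝ (fun y => hessQF φ y u) x := by
    intro u; simp only [hess_eq]; fun_prop
  have DG : DifferentiableAt ℝ (fun y => hessQF φ y v - lapl φ y / n) x := by
    simp only [lapl, div_eq_mul_inv]
    exact (DH v).sub ((DifferentiableAt.fun_sum fun i _ => DH _).mul_const _)
  have Dv : DifferentiableAt ℝ (fun y => fderiv ℝ φ y v) x := by fun_prop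
  have hg : ⟪v, gradient (fun y => phiEps c ε φ y v) x⟫_ℝ = ⟪v, gradient φ x⟫_ℝ
      - ε * c * hessQF φ x v + ε ^ 2 * c ^ 2 *
        ⟪v, gradient (fun y => hessQF φ y v - lapl φ y / n) x⟫_ℝ := by
    simp only [inner_grad, phiEps]
    have h := ((D0.hasFDerivAt.sub (Dv.hasFDerivAt.const_mul (ε * c))).add
      (DG.hasFDerivAt.const_mul (ε ^ 2 * c ^ 2))).fderiv
    have h2 : fderiv ℝ (fun y => fderiv ℝ φ y v) x v = hessQF φ x v := by
      rw [fderiv_clm_apply D1 (differentiableAt_const v), hess_eq]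
      simp
    have h' := congrArg (fun T => T v) h
    simp only [add_apply, sub_apply,
      smul_apply, smul_eq_mul, h2] at h'
    exact h'
  rw [hg]
  simp only [phiEps]
  have hn0 : (n:ℝ) ≠ 0 := by positivity
  field_simp
  ring
end

section
/- Let n ≥ 2, let σ be the surface measure on the unit sphere S^{n-1} ⊂ ℝⁿ with N := σ(S^{n-1}), let c > 0, and let φ : ℝⁿ → ℝ be twice continuously differentiable. For ε ≠ 0 define φ^ε(x,v) := φ(x) − ε·c·⟨v, ∇φ(x)⟩. Then for all x ∈ ℝⁿ, v ∈ S^{n-1} and ε ≠ 0: ε⁻²·[ (1/N)∫_{S^{n-1}} φ^ε(x,w) dσ(w) − φ^ε(x,v) ] − ε⁻¹·c·⟨v, ∇_x φ^ε(x,v)⟩ = c²·D²φ(x)[v,v]. Consequently, if the second derivatives of φ are bounded in norm by M, then |ε⁻²Qφ^ε − ε⁻¹c⟨v,∇_xφ^ε⟩| ≤ c²·M uniformly in x, v and ε ≠ 0. -/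
open MeasureTheory Real
open scoped InnerProductSpace

/-- The first-order perturbed test function `φ^ε(x,v) = φ(x) − εc⟨v,∇φ(x)⟩`. -/
noncomputable def phiEps1 {n : ℕ} (c ε : ℝ) (φ : EuclideanSpace ℝ (Fin n) → ℝ)
    (x v : EuclideanSpace ℝ (Fin n)) : ℝ :=
  φ x - ε * c * ⟪v, gradient φ x⟫_ℝ

/-- Radial projection of a face of the cube onto the sphere. -/
noncomputable def faceMap (m : ℕ) (i : Fin (m + 1)) (s : ℝ) (y : Fin m → ℝ) :
    EuclideanSpace ℝ (Fin (m + 1)) :=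
  (‖(WithLp.toLp 2 (i.insertNth s y : Fin (m + 1) → ℝ) : EuclideanSpace ℝ (Fin (m + 1)))‖)⁻¹ •
    (WithLp.toLp 2 (i.insertNth s y : Fin (m + 1) → ℝ) : EuclideanSpace ℝ (Fin (m + 1)))

lemma faceMap_contDiff (m : ℕ) (i : Fin (m + 1)) (s : ℝ) (hs : s ≠ 0) :
    ContDiff ℝ 1 (faceMap m i s) := by
  have h1 : ContDiff ℝ 1 (fun y : Fin m → ℝ =>
      (WithLp.toLp 2 (i.insertNth s y : Fin (m + 1) → ℝ) : EuclideanSpace ℝ (Fin (m + 1)))) := by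
    rw [contDiff_euclidean]
    intro j
    refine Fin.succAboveCases i ?_ (fun k => ?_) j
    · simpa using contDiff_const
    · simpa using contDiff_apply ℝ ℝ k
  have h0 : ∀ y : Fin m → ℝ,
      (WithLp.toLp 2 (i.insertNth s y : Fin (m + 1) → ℝ) : EuclideanSpace ℝ (Fin (m + 1))) ≠ 0 := by
    intro y h
    have := congrArg (fun z : EuclideanSpace ℝ (Fin (m + 1)) => z i) h
    simp at this
    exact hs this
  exact ((h1.norm ℝ h0).inv (fun y => norm_ne_zero_iff.2 (h0 y))).smul h1

lemma sphere_subset (m : ℕ) :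
    Metric.sphere (0 : EuclideanSpace ℝ (Fin (m + 1))) 1 ⊆
      ⋃ i : Fin (m + 1), (faceMap m i 1 '' Metric.closedBall 0 1 ∪
        faceMap m i (-1) '' Metric.closedBall 0 1) := by
  intro w hw
  have hw1 : ‖w‖ = 1 := by simpa using hw
  obtain ⟨i, -, hi⟩ := Finset.exists_max_image Finset.univ (fun j => |w j|) Finset.univ_nonempty
  have hpos : 0 < |w i| := by
    rw [abs_pos]
    intro h
    have : w = 0 := by
      ext j
      have := hi j (Finset.mem_univ j)
      rw [h, abs_zero] at this
      simpa using this
    rw [this] at hw1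
    simp at hw1
  have key : ∀ s : ℝ, w i = s * |w i| →
      w ∈ faceMap m i s '' Metric.closedBall 0 1 := by
    intro s hs
    refine ⟨fun k => w (i.succAbove k) / |w i|, ?_, ?_⟩
    · rw [mem_closedBall_zero_iff, pi_norm_le_iff_of_nonneg zero_le_one]
      intro k
      rw [Real.norm_eq_abs, abs_div, abs_abs, div_le_one hpos]
      exact hi _ (Finset.mem_univ _)
    · have e : (WithLp.toLp 2 (i.insertNth s (fun k => w (i.succAbove k) / |w i|) :
          Fin (m + 1) → ℝ) : EuclideanSpace ℝ (Fin (m + 1))) = |w i|⁻¹ • w := by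
        ext j
        refine Fin.succAboveCases i ?_ (fun k => ?_) j
        · simp
          rw [eq_inv_mul_iff_mul_eq₀ hpos.ne', mul_comm, ← hs]
        · simp [div_eq_inv_mul]
      rw [faceMap, e, norm_smul, hw1]
      simp [smul_smul, hpos.ne']
  refine Set.mem_iUnion.2 ⟨i, ?_⟩
  rcases abs_choice (w i) with h | h
  · left; apply key; rw [one_mul, h]
  · right; apply key; rw [neg_one_mul, h, neg_neg]

lemma image_finite (m : ℕ) (i : Fin (m + 1)) (s : ℝ) (hs : s ≠ 0) :
    (μH[(m : ℝ)] : Measure (EuclideanSpace ℝ (Fin (m + 1))))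
      (faceMap m i s '' Metric.closedBall 0 1) < ⊤ := by
  obtain ⟨K, hK⟩ := ((faceMap_contDiff m i s hs).locallyLipschitz.locallyLipschitzOn
    (s := Metric.closedBall 0 1)).exists_lipschitzOnWith_of_compact (isCompact_closedBall _ _)
  refine (hK.hausdorffMeasure_image_le (Nat.cast_nonneg m)).trans_lt ?_
  have : (μH[(m : ℝ)] : Measure (Fin m → ℝ)) = volume := by
    simpa using hausdorffMeasure_pi_real (ι := Fin m)
  rw [this]
  exact ENNReal.mul_lt_top (ENNReal.rpow_lt_top_of_nonneg (Nat.cast_nonneg m) ENNReal.coe_ne_top)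
    measure_closedBall_lt_top

lemma sphere_finite (m : ℕ) :
    (μH[(m : ℝ)] : Measure (EuclideanSpace ℝ (Fin (m + 1)))) (Metric.sphere 0 1) < ⊤ := by
  refine (measure_mono (sphere_subset m)).trans_lt ?_
  refine (measure_iUnion_fintype_le _ _).trans_lt ?_
  refine ENNReal.sum_lt_top.2 fun i _ => ?_
  exact (measure_union_le _ _).trans_lt
    (ENNReal.add_lt_top.2 ⟨image_finite m i 1 one_ne_zero, image_finite m i (-1) (by norm_num)⟩)

lemma sphere_pos (m : ℕ) :
    0 < (μH[(m : ℝ)] : Measure (EuclideanSpace ℝ (Fin (m + 1)))) (Metric.sphere 0 1) := by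
  let p : EuclideanSpace ℝ (Fin (m + 1)) → (Fin m → ℝ) := fun w k => w k.succ
  have hp : LipschitzWith 1 p := by
    refine LipschitzWith.of_dist_le_mul fun w z => ?_
    rw [NNReal.coe_one, one_mul, dist_pi_le_iff dist_nonneg]
    intro k
    have := PiLp.norm_apply_le (w - z) k.succ
    rw [dist_eq_norm, dist_eq_norm]
    simpa [p] using this
  have h := hp.hausdorffMeasure_image_le (Nat.cast_nonneg m) (Metric.sphere 0 1)
  have hv : (μH[(m : ℝ)] : Measure (Fin m → ℝ)) = volume := by
    simpa using hausdorffMeasure_pi_real (ι := Fin m)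
  rw [hv] at h
  simp only [ENNReal.coe_one, ENNReal.one_rpow, one_mul] at h
  refine lt_of_lt_of_le ?_ h
  let U : Set (Fin m → ℝ) := {y | ∑ k, y k ^ 2 < 1}
  have hU : IsOpen U := isOpen_lt (by fun_prop) continuous_const
  have hne : U.Nonempty := ⟨0, by simp [U]⟩
  refine (hU.measure_pos volume hne).trans_le (measure_mono ?_)
  intro y hy
  have hy' : ∑ k, y k ^ 2 < 1 := hy
  refine ⟨WithLp.toLp 2 (Fin.cons (√(1 - ∑ k, y k ^ 2)) y : Fin (m + 1) → ℝ), ?_, ?_⟩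
  · rw [mem_sphere_zero_iff_norm, EuclideanSpace.norm_eq, Fin.sum_univ_succ]
    simp [Real.sq_sqrt (show 0 ≤ 1 - ∑ k, y k ^ 2 by linarith)]
  · ext k
    simp [p]

lemma sphMeasure_succ (m : ℕ) : sphMeasure (m + 1) = μH[(m : ℝ)] := by
  simp [sphMeasure]

lemma average_eq (n : ℕ) (hn : 2 ≤ n) (a : ℝ) (b : ℝ) (g : EuclideanSpace ℝ (Fin n)) :
    (1 / sphN n) * (∫ w in Metric.sphere (0 : EuclideanSpace ℝ (Fin n)) 1,
      (a - b * ⟪w, g⟫_ℝ) ∂(sphMeasure n)) = a := by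
  obtain ⟨m, rfl⟩ : ∃ m, n = m + 1 := ⟨n - 1, by omega⟩
  have hfin := sphere_finite m
  have hpos := sphere_pos m
  rw [← sphMeasure_succ] at hfin hpos
  have hN : sphN (m + 1) ≠ 0 := (ENNReal.toReal_pos hpos.ne' hfin.ne).ne'
  have hfm : IsFiniteMeasure ((sphMeasure (m + 1)).restrict
    (Metric.sphere (0 : EuclideanSpace ℝ (Fin (m + 1))) 1)) := ⟨by simpa using hfin⟩
  have hint : IntegrableOn (fun w : EuclideanSpace ℝ (Fin (m + 1)) => ⟪w, g⟫_ℝ)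
      (Metric.sphere 0 1) (sphMeasure (m + 1)) := by
    refine Integrable.of_bound (C := ‖g‖)
      (by exact (Continuous.inner continuous_id continuous_const).aestronglyMeasurable) ?_
    filter_upwards [ae_restrict_mem Metric.isClosed_sphere.measurableSet] with w hw
    have hw1 : ‖w‖ = 1 := by simpa using hw
    simpa [hw1] using norm_inner_le_norm (𝕜 := ℝ) w g
  have hzero : ∫ w in Metric.sphere (0 : EuclideanSpace ℝ (Fin (m + 1))) 1,
      ⟪w, g⟫_ℝ ∂(sphMeasure (m + 1)) = 0 := by
    have mp : MeasurePreserving (IsometryEquiv.neg (EuclideanSpace ℝ (Fin (m + 1))))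
        (sphMeasure (m + 1)) (sphMeasure (m + 1)) :=
      IsometryEquiv.measurePreserving_hausdorffMeasure _ _
    have := mp.setIntegral_preimage_emb
      (IsometryEquiv.neg (EuclideanSpace ℝ (Fin (m + 1)))).toHomeomorph.measurableEmbedding
      (fun w => ⟪w, g⟫_ℝ) (Metric.sphere 0 1)
    have hpre : (IsometryEquiv.neg (EuclideanSpace ℝ (Fin (m + 1)))) ⁻¹' (Metric.sphere 0 1)
        = Metric.sphere 0 1 := by
      ext w; simp
    rw [hpre] at this
    simp only [IsometryEquiv.neg_apply, inner_neg_left, integral_neg] at this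
    linarith
  rw [integral_sub (integrable_const _) (hint.const_mul b), integral_const_mul, hzero]
  simp only [integral_const, mul_zero, sub_zero, smul_eq_mul, measureReal_restrict_apply_univ]
  change 1 / sphN (m + 1) * (sphN (m + 1) * a) = a
  field_simp

lemma inner_grad_phi {n : ℕ} (c ε : ℝ) (φ : EuclideanSpace ℝ (Fin n) → ℝ) (hφ : ContDiff ℝ 2 φ)
    (x v : EuclideanSpace ℝ (Fin n)) :
    ⟪v, gradient (fun y => phiEps1 c ε φ y v) x⟫_ℝ =
      fderiv ℝ φ x v - ε * c * iteratedFDeriv ℝ 2 φ x ![v, v] := by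
  have e : (fun y => phiEps1 c ε φ y v) = fun y => φ y - ε * c * fderiv ℝ φ y v := by
    funext y
    simp [phiEps1, inner_gradient_right]
  have d1 : HasFDerivAt φ (fderiv ℝ φ x) x := (hφ.differentiable (by norm_num) x).hasFDerivAt
  have d2 : HasFDerivAt (fderiv ℝ φ) (fderiv ℝ (fderiv ℝ φ) x) x :=
    ((hφ.fderiv_right (m := 1) (by norm_num)).differentiable (by norm_num) x).hasFDerivAt
  have d3 := d1.sub ((d2.clm_apply (hasFDerivAt_const v x)).const_mul (ε * c))
  rw [e, inner_gradient_right, iteratedFDeriv_two_apply]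
  erw [d3.fderiv]
  simp

lemma main_identity (n : ℕ) (hn : 2 ≤ n) (c : ℝ)
    (φ : EuclideanSpace ℝ (Fin n) → ℝ) (hφ : ContDiff ℝ 2 φ)
    (x v : EuclideanSpace ℝ (Fin n)) (ε : ℝ) (hε : ε ≠ 0) :
      (ε ^ 2)⁻¹ * ((1 / sphN n) *
            (∫ w in Metric.sphere (0 : EuclideanSpace ℝ (Fin n)) 1,
              phiEps1 c ε φ x w ∂(sphMeasure n)) - phiEps1 c ε φ x v)
        - ε⁻¹ * c * ⟪v, gradient (fun y => phiEps1 c ε φ y v) x⟫_ℝ =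
      c ^ 2 * iteratedFDeriv ℝ 2 φ x ![v, v] := by
  have h1 : (1 / sphN n) * (∫ w in Metric.sphere (0 : EuclideanSpace ℝ (Fin n)) 1,
      phiEps1 c ε φ x w ∂(sphMeasure n)) = φ x := average_eq n hn (φ x) (ε * c) (gradient φ x)
  have h2 : phiEps1 c ε φ x v = φ x - ε * c * fderiv ℝ φ x v := by
    simp [phiEps1, inner_gradient_right]
  rw [h1, inner_grad_phi c ε φ hφ, h2]
  field_simp
  ring

/-- Key computation for relative compactness in Theorem 1: applying the MSRE generator
`L^ε = ε⁻²Q + ε⁻¹cS(θ)` to `φ^ε = φ + εφ₁` the singular terms cancel and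
`L^εφ^ε = c²D²φ(x)[v,v]`; consequently, if `‖D²φ‖ ≤ M` everywhere then `|L^εφ^ε| ≤ c²M`
uniformly in `x`, `v` and `ε ≠ 0`. -/
theorem msre_generator_first_order_cancellation (n : ℕ) (hn : 2 ≤ n) (c : ℝ) (hc : 0 < c)
    (φ : EuclideanSpace ℝ (Fin n) → ℝ) (hφ : ContDiff ℝ 2 φ) (M : ℝ) :
    (∀ (x v : EuclideanSpace ℝ (Fin n)),
        v ∈ Metric.sphere (0 : EuclideanSpace ℝ (Fin n)) 1 → ∀ ε : ℝ, ε ≠ 0 →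
      (ε ^ 2)⁻¹ * ((1 / sphN n) *
            (∫ w in Metric.sphere (0 : EuclideanSpace ℝ (Fin n)) 1,
              phiEps1 c ε φ x w ∂(sphMeasure n)) - phiEps1 c ε φ x v)
        - ε⁻¹ * c * ⟪v, gradient (fun y => phiEps1 c ε φ y v) x⟫_ℝ =
      c ^ 2 * iteratedFDeriv ℝ 2 φ x ![v, v]) ∧
    ((∀ x : EuclideanSpace ℝ (Fin n), ‖iteratedFDeriv ℝ 2 φ x‖ ≤ M) →
      ∀ (x v : EuclideanSpace ℝ (Fin n)),
        v ∈ Metric.sphere (0 : EuclideanSpace ℝ (Fin n)) 1 → ∀ ε : ℝ, ε ≠ 0 →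
      |(ε ^ 2)⁻¹ * ((1 / sphN n) *
            (∫ w in Metric.sphere (0 : EuclideanSpace ℝ (Fin n)) 1,
              phiEps1 c ε φ x w ∂(sphMeasure n)) - phiEps1 c ε φ x v)
        - ε⁻¹ * c * ⟪v, gradient (fun y => phiEps1 c ε φ y v) x⟫_ℝ| ≤ c ^ 2 * M) := by
  refine ⟨fun x v _ ε hε => main_identity n hn c φ hφ x v ε hε, fun hM x v hv ε hε => ?_⟩
  rw [main_identity n hn c φ hφ x v ε hε, abs_mul, abs_of_nonneg (sq_nonneg c)]
  refine mul_le_mul_of_nonneg_left ?_ (sq_nonneg c)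
  have hv1 : ‖v‖ = 1 := by simpa using hv
  have h := (iteratedFDeriv ℝ 2 φ x).le_opNorm ![v, v]
  simp only [Fin.prod_univ_two, Matrix.cons_val_zero, Matrix.cons_val_one, hv1, mul_one] at h
  exact h.trans (hM x)
end
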